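/- In the finite pool-based AL model, let b > 0 and n be a positive integer with |𝒯| ≤ e^{b·n}, let ε ∈ [0,1], and suppose the data selection strategy satisfies P[𝖽(W,H) > d] ≤ ε. Then for every γ ≥ 0, ε ≥ P[ j(W,U,H) ≥ b·n + γ ] − e^{−γ}; consequently, ε ≥ sup_{γ ≥ 0} ( P[ j(W,U,H) ≥ b·n + γ ] − e^{−γ} ). -/

import Mathlib

open scoped BigOperators

/-- If `log x ≥ a > 0` for a nonnegative `x`, then `1 ≤ x * exp (-a)`. -/
theorem one_le_mul_exp_neg_of_le_log {x a : ℝ} (hx : 0 ≤ x) (ha : 0 < a)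
    (h : a ≤ Real.log x) : 1 ≤ x * Real.exp (-a) := by
  have hx' : 0 < x := by
    refine lt_of_le_of_ne hx fun h0 => ?_
    rw [← h0, Real.log_zero] at h
    linarith
  have h1 : Real.exp a ≤ x := (Real.le_log_iff_exp_le hx').1 h
  calc 1 = Real.exp a * Real.exp (-a) := by rw [← Real.exp_add]; simp
    _ ≤ x * Real.exp (-a) := by gcongr

/-- The likelihood ratio `Q(u|h) / P_U(u)`, integrated over `(W,U)` independent of `(T,H)` with
`T` distributed according to the counting measure, has total mass at most `|𝒯|`. -/
theorem sum_mul_likelihood_ratio_le_card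
    {𝒲 𝒰 𝒯 ℋ : Type*} [Fintype 𝒲] [Fintype 𝒰] [Fintype 𝒯] [Fintype ℋ]
    (PW : 𝒲 → ℝ) (PU : 𝒲 → 𝒰 → ℝ)
    (PH : 𝒯 → ℋ → ℝ) (hPH0 : ∀ t h, 0 ≤ PH t h) (hPH1 : ∀ t, ∑ h, PH t h = 1)
    (Q : ℋ → 𝒰 → ℝ) (hQ0 : ∀ h u, 0 ≤ Q h u) (hQ1 : ∀ h, ∑ u, Q h u = 1) :
    ∑ w, ∑ u, ∑ t, ∑ h, PW w * PU w u * PH t h * (Q h u / ∑ w', PW w' * PU w' u)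
      ≤ Fintype.card 𝒯 := by
  have marginal_mul_le : ∀ u t h,
      ∑ w, PW w * PU w u * PH t h * (Q h u / ∑ w', PW w' * PU w' u) ≤ PH t h * Q h u := by
    intro u t h
    rw [← Finset.sum_mul, ← Finset.sum_mul]
    by_cases h0 : ∑ w', PW w' * PU w' u = 0
    · simpa [h0] using mul_nonneg (hPH0 t h) (hQ0 h u)
    · exact le_of_eq (by field_simp)
  calc _ = ∑ t, ∑ h, ∑ u, ∑ w,
        PW w * PU w u * PH t h * (Q h u / ∑ w', PW w' * PU w' u) := by
        rw [Finset.sum_comm]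
        simp_rw [Finset.sum_comm (s := (Finset.univ : Finset 𝒲))]
        rw [Finset.sum_comm]
        exact Finset.sum_congr rfl fun t _ => Finset.sum_comm
    _ ≤ ∑ t, ∑ h, ∑ u, PH t h * Q h u :=
        Finset.sum_le_sum fun t _ => Finset.sum_le_sum fun h _ =>
          Finset.sum_le_sum fun u _ => marginal_mul_le u t h
    _ = Fintype.card 𝒯 := by simp [← Finset.mul_sum, hQ1, hPH1]

/-- **Converse bound on the excess-distortion probability in finite pool-based AL**
(Theorem 1 of the paper).

Finite pool-based active-learning model: finite nonempty types `𝒲` (sub-distributions),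
`𝒰` (pools), `𝒯` (training datasets), `ℋ` (hypotheses); a pmf `PW` on `𝒲`; Markov kernels
`PU` (pool observation), `PT` (data selection) and `PH` (learning); the joint law of
`(W,U,T,H)` is `PW w * PU w u * PT u t * PH t h`.  `dst` is a nonnegative distortion
measure, `d ≥ 0` a distortion level, and the tilted information is
`j(w,u,h) = log (Q h u / P_U u) + lam * (dst w h - d)` for a kernel `Q : ℋ → 𝒰` and
`lam ≥ 0`, where `P_U u = ∑ w, PW w * PU w u` is the marginal of `U`.

If `|𝒯| ≤ exp (b*n)` and `P[dst (W,H) > d] ≤ ε`, then for every `γ ≥ 0`,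
`ε ≥ P[ j(W,U,H) ≥ b*n + γ ] - exp (-γ)`, and consequently `ε` dominates the supremum
of this expression over `γ ≥ 0`. -/
theorem excess_distortion_converse
    {𝒲 𝒰 𝒯 ℋ : Type*} [Fintype 𝒲] [Nonempty 𝒲] [Fintype 𝒰] [Nonempty 𝒰]
    [Fintype 𝒯] [Nonempty 𝒯] [Fintype ℋ] [Nonempty ℋ]
    (PW : 𝒲 → ℝ) (hPW0 : ∀ w, 0 ≤ PW w) (hPW1 : ∑ w, PW w = 1)
    (PU : 𝒲 → 𝒰 → ℝ) (hPU0 : ∀ w u, 0 ≤ PU w u) (hPU1 : ∀ w, ∑ u, PU w u = 1)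
    (PT : 𝒰 → 𝒯 → ℝ) (hPT0 : ∀ u t, 0 ≤ PT u t) (hPT1 : ∀ u, ∑ t, PT u t = 1)
    (PH : 𝒯 → ℋ → ℝ) (hPH0 : ∀ t h, 0 ≤ PH t h) (hPH1 : ∀ t, ∑ h, PH t h = 1)
    (dst : 𝒲 → ℋ → ℝ) (hdst : ∀ w h, 0 ≤ dst w h) (d : ℝ) (hd : 0 ≤ d)
    (lam : ℝ) (hlam : 0 ≤ lam)
    (Q : ℋ → 𝒰 → ℝ) (hQ0 : ∀ h u, 0 ≤ Q h u) (hQ1 : ∀ h, ∑ u, Q h u = 1)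
    (b : ℝ) (hb : 0 < b) (n : ℕ) (hn : 0 < n)
    (hcard : (Fintype.card 𝒯 : ℝ) ≤ Real.exp (b * n))
    (ε : ℝ) (hε0 : 0 ≤ ε) (hε1 : ε ≤ 1)
    (hexcess : (∑ w, ∑ u, ∑ t, ∑ h,
        if d < dst w h then PW w * PU w u * PT u t * PH t h else 0) ≤ ε) :
    (∀ γ : ℝ, 0 ≤ γ →
      (∑ w, ∑ u, ∑ t, ∑ h,
        if b * n + γ ≤ Real.log (Q h u / ∑ w', PW w' * PU w' u) + lam * (dst w h - d)
        then PW w * PU w u * PT u t * PH t h else 0) - Real.exp (-γ) ≤ ε)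
    ∧ (⨆ γ : {x : ℝ // 0 ≤ x},
        ((∑ w, ∑ u, ∑ t, ∑ h,
          if b * n + γ.1 ≤ Real.log (Q h u / ∑ w', PW w' * PU w' u) + lam * (dst w h - d)
          then PW w * PU w u * PT u t * PH t h else 0) - Real.exp (-γ.1))) ≤ ε := by
  have bound : ∀ γ : ℝ, 0 ≤ γ →
      (∑ w, ∑ u, ∑ t, ∑ h,
        if b * n + γ ≤ Real.log (Q h u / ∑ w', PW w' * PU w' u) + lam * (dst w h - d)
        then PW w * PU w u * PT u t * PH t h else 0) - Real.exp (-γ) ≤ ε := by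
    intro γ hγ
    have hpos : 0 < b * n + γ := by positivity
    have pointwise : ∀ w u t h,
        (if b * n + γ ≤ Real.log (Q h u / ∑ w', PW w' * PU w' u) + lam * (dst w h - d)
          then PW w * PU w u * PT u t * PH t h else 0) ≤
        (if d < dst w h then PW w * PU w u * PT u t * PH t h else 0) +
          PW w * PU w u * PH t h * (Q h u / ∑ w', PW w' * PU w' u)
            * Real.exp (-(b * n + γ)) := by
      intro w u t h
      have hratio : 0 ≤ Q h u / ∑ w', PW w' * PU w' u :=
        div_nonneg (hQ0 h u) (Finset.sum_nonneg fun w' _ => mul_nonneg (hPW0 w') (hPU0 w' u))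
      have hw : 0 ≤ PW w * PU w u := mul_nonneg (hPW0 w) (hPU0 w u)
      have hm : 0 ≤ PW w * PU w u * PH t h := mul_nonneg hw (hPH0 t h)
      have hp : 0 ≤ PW w * PU w u * PT u t * PH t h :=
        mul_nonneg (mul_nonneg hw (hPT0 u t)) (hPH0 t h)
      have hr : 0 ≤ PW w * PU w u * PH t h * (Q h u / ∑ w', PW w' * PU w' u)
          * Real.exp (-(b * n + γ)) := mul_nonneg (mul_nonneg hm hratio) (Real.exp_pos _).le
      by_cases hD : d < dst w h
      · rw [if_pos hD]
        split_ifs <;> linarith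
      · rw [if_neg hD, zero_add]
        split_ifs with hj
        · have hdist : lam * (dst w h - d) ≤ 0 :=
            mul_nonpos_of_nonneg_of_nonpos hlam (by linarith)
          have hone := one_le_mul_exp_neg_of_le_log hratio hpos (by linarith)
          have hPT : PT u t ≤ 1 :=
            (Finset.single_le_sum (fun t' _ => hPT0 u t') (Finset.mem_univ t)).trans_eq (hPT1 u)
          calc PW w * PU w u * PT u t * PH t h = PW w * PU w u * PH t h * PT u t := by ring
            _ ≤ PW w * PU w u * PH t h * ((Q h u / ∑ w', PW w' * PU w' u)
                * Real.exp (-(b * n + γ))) := mul_le_mul_of_nonneg_left (hPT.trans hone) hm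
            _ = _ := by ring
        · exact hr
    have total := Finset.sum_le_sum fun w (_ : w ∈ Finset.univ) =>
      Finset.sum_le_sum fun u (_ : u ∈ Finset.univ) =>
      Finset.sum_le_sum fun t (_ : t ∈ Finset.univ) =>
      Finset.sum_le_sum fun h (_ : h ∈ Finset.univ) => pointwise w u t h
    simp only [Finset.sum_add_distrib, ← Finset.sum_mul] at total
    have mass : (∑ w, ∑ u, ∑ t, ∑ h,
        PW w * PU w u * PH t h * (Q h u / ∑ w', PW w' * PU w' u)) * Real.exp (-(b * n + γ))
          ≤ Real.exp (-γ) := by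
      calc _ ≤ Real.exp (b * n) * Real.exp (-(b * n + γ)) := by
            gcongr
            exact (sum_mul_likelihood_ratio_le_card PW PU PH hPH0 hPH1 Q hQ0 hQ1).trans hcard
        _ = Real.exp (-γ) := by rw [← Real.exp_add]; congr 1; ring
    linarith
  have : Nonempty {x : ℝ // 0 ≤ x} := ⟨⟨0, le_rfl⟩⟩
  exact ⟨bound, ciSup_le fun γ => bound γ.1 γ.2⟩
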